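/- In any nondegenerate triangle, the distance from the incenter X1 to the centroid X2 satisfies dist(X1, X2) ≤ (2/3)·dist(X1, X3), where X3 is the circumcenter. -/

import Mathlib

/-- The point with normalized barycentric coordinates `(x : y : z)`
with respect to the triangle `A B C`. -/
noncomputable def bary (A B C : EuclideanSpace ℝ (Fin 2)) (x y z : ℝ) :
    EuclideanSpace ℝ (Fin 2) :=
  (x + y + z)⁻¹ • (x • A + y • B + z • C)

/-- The triangle center with barycentric coordinates
`(f a b c : f b c a : f c a b)` where `a, b, c` are the side lengths. -/
noncomputable def tcenter (f : ℝ → ℝ → ℝ → ℝ) (A B C : EuclideanSpace ℝ (Fin 2)) :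
    EuclideanSpace ℝ (Fin 2) :=
  bary A B C (f (dist B C) (dist C A) (dist A B))
    (f (dist C A) (dist A B) (dist B C))
    (f (dist A B) (dist B C) (dist C A))

/-!
Let `I`, `G`, `O`, `H` be the incenter, centroid, circumcenter and orthocenter. Lagrange's formula
for the distance to a barycentric combination expresses `IG²`, `GO²` and `IO²` through the side
lengths and the circumradius, and gives
`3 (a + b + c) (2 IG² + GO² - IO²) = (b + c - a) (c + a - b) (a + b - c) - abc ≤ 0`.
Since `H = 3G - 2O`, the factor `2 IG² + GO² - IO²` equals `⟪I - G, I - H⟫`, so this says that `I`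
lies in the orthocentroidal disk, the one with diameter `GH`. Together with `IO ≤ IG + GO` it
yields `IG (3 IG - 2 IO) ≤ 0`.
-/

section Barycentric

variable {V : Type*} [NormedAddCommGroup V]

/-- `P` is the point with barycentric coordinates `(x : y : z)` with respect to `A`, `B`, `C`.
The coordinates are homogeneous, and the points are position vectors. It extends `bary` to any
normed space and excludes weights of sum zero, for which `bary` takes the junk value `0`. -/
structure HasBarycentric [NormedSpace ℝ V] (A B C : V) (x y z : ℝ) (P : V) : Prop where
  sum_ne_zero : x + y + z ≠ 0
  sum_smul : (x + y + z) • P = x • A + y • B + z • C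

theorem hasBarycentric_bary (A B C : EuclideanSpace ℝ (Fin 2)) {x y z : ℝ}
    (h : x + y + z ≠ 0) : HasBarycentric A B C x y z (bary A B C x y z) :=
  ⟨h, smul_inv_smul₀ h _⟩

namespace HasBarycentric

theorem rotate [NormedSpace ℝ V] {A B C P : V} {x y z : ℝ} (hP : HasBarycentric A B C x y z P) :
    HasBarycentric B C A y z x P where
  sum_ne_zero := by rw [← add_rotate]; exact hP.sum_ne_zero
  sum_smul := by rw [← add_rotate, hP.sum_smul, add_rotate]

variable [InnerProductSpace ℝ V] {A B C P I G O : V} {x y z a b c : ℝ}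

theorem sum_sq_mul_dist_sq (hP : HasBarycentric A B C x y z P) (Q : V) :
    (x + y + z) ^ 2 * dist P Q ^ 2 =
      x ^ 2 * dist A Q ^ 2 + y ^ 2 * dist B Q ^ 2 + z ^ 2 * dist C Q ^ 2 +
        2 * (y * z * inner ℝ (B - Q) (C - Q) + z * x * inner ℝ (C - Q) (A - Q) +
          x * y * inner ℝ (A - Q) (B - Q)) := by
  have hPQ : (x + y + z) • (P - Q) = x • (A - Q) + y • (B - Q) + z • (C - Q) := by
    rw [smul_sub, hP.sum_smul]
    module
  calc (x + y + z) ^ 2 * dist P Q ^ 2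
      = ‖x • (A - Q) + y • (B - Q) + z • (C - Q)‖ ^ 2 := by
        rw [← hPQ, norm_smul, mul_pow, Real.norm_eq_abs, sq_abs, dist_eq_norm]
    _ = _ := by
        simp only [norm_add_sq_real, norm_smul, mul_pow, Real.norm_eq_abs, sq_abs, inner_add_left,
          real_inner_smul_left, real_inner_smul_right, dist_eq_norm,
          real_inner_comm (A - Q) (C - Q)]
        ring

theorem dist_sq (hP : HasBarycentric A B C x y z P) (Q : V) :
    dist P Q ^ 2 = (x * dist A Q ^ 2 + y * dist B Q ^ 2 + z * dist C Q ^ 2) / (x + y + z) -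
      (y * z * dist B C ^ 2 + z * x * dist C A ^ 2 + x * y * dist A B ^ 2) / (x + y + z) ^ 2 := by
  have law_of_cosines (X Y : V) :
      dist X Y ^ 2 = dist X Q ^ 2 - 2 * inner ℝ (X - Q) (Y - Q) + dist Y Q ^ 2 := by
    simp only [dist_eq_norm, ← norm_sub_sq_real, sub_sub_sub_cancel_right]
  have hsum := hP.sum_ne_zero
  apply mul_left_cancel₀ (pow_ne_zero 2 hsum)
  rw [hP.sum_sq_mul_dist_sq, law_of_cosines B C, law_of_cosines C A, law_of_cosines A B]
  field_simp
  ring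

theorem dist_circumcenter_eq (ha : dist B C = a) (hb : dist C A = b) (hc : dist A B = c)
    (hO : HasBarycentric A B C (a ^ 2 * (a ^ 2 - b ^ 2 - c ^ 2)) (b ^ 2 * (b ^ 2 - c ^ 2 - a ^ 2))
      (c ^ 2 * (c ^ 2 - a ^ 2 - b ^ 2)) O) :
    dist O A = dist O B := by
  refine (sq_eq_sq₀ dist_nonneg dist_nonneg).1 ?_
  rw [hO.dist_sq A, hO.dist_sq B, dist_self, dist_self, dist_comm B A, dist_comm C B, ha, hb, hc]
  ring

theorem dist_incenter_sq (ha : dist B C = a) (hb : dist C A = b) (hc : dist A B = c)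
    (hI : HasBarycentric A B C a b c I) (Q : V) :
    dist I Q ^ 2 = (a * dist A Q ^ 2 + b * dist B Q ^ 2 + c * dist C Q ^ 2 - a * b * c) /
      (a + b + c) := by
  have hsum := hI.sum_ne_zero
  rw [hI.dist_sq, ha, hb, hc]
  field_simp

theorem dist_incenter_vertex_sq (ha : dist B C = a) (hb : dist C A = b) (hc : dist A B = c)
    (hI : HasBarycentric A B C a b c I) :
    dist I A ^ 2 = b * c * (b + c - a) / (a + b + c) := by
  rw [hI.dist_incenter_sq ha hb hc, dist_self, dist_comm B A, hb, hc]
  ring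

theorem dist_centroid_sq (hG : HasBarycentric A B C 1 1 1 G) (Q : V) :
    dist G Q ^ 2 = (dist Q A ^ 2 + dist Q B ^ 2 + dist Q C ^ 2) / 3 -
      (dist B C ^ 2 + dist C A ^ 2 + dist A B ^ 2) / 9 := by
  rw [hG.dist_sq, dist_comm A, dist_comm B Q, dist_comm C Q]
  ring

theorem orthocentroidal_power_incenter (ha : dist B C = a) (hb : dist C A = b)
    (hc : dist A B = c) (hI : HasBarycentric A B C a b c I) (hG : HasBarycentric A B C 1 1 1 G)
    (hAB : dist O A = dist O B) (hBC : dist O B = dist O C) :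
    2 * dist I G ^ 2 + dist G O ^ 2 - dist I O ^ 2 =
      ((b + c - a) * (c + a - b) * (a + b - c) - a * b * c) / (3 * (a + b + c)) := by
  have hIA := hI.dist_incenter_vertex_sq ha hb hc
  have hIB := hI.rotate.dist_incenter_vertex_sq hb hc ha
  have hIC := hI.rotate.rotate.dist_incenter_vertex_sq hc ha hb
  rw [← add_rotate] at hIB
  rw [add_rotate] at hIC
  have hsum := hI.sum_ne_zero
  rw [dist_comm I G, hG.dist_centroid_sq I, hG.dist_centroid_sq O, hIA, hIB, hIC,
    hI.dist_incenter_sq ha hb hc, dist_comm A O, dist_comm B O, dist_comm C O, hAB, hBC,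
    ha, hb, hc]
  field_simp
  ring

end HasBarycentric

end Barycentric

section Inequalities

theorem add_sub_mul_add_sub_mul_add_sub_le {a b c : ℝ} (ha : a ≤ b + c) (hb : b ≤ c + a)
    (hc : c ≤ a + b) : (b + c - a) * (c + a - b) * (a + b - c) ≤ a * b * c := by
  have hbc := mul_nonneg (sub_nonneg.2 ha) (sq_nonneg (b - c))
  have hca := mul_nonneg (sub_nonneg.2 hb) (sq_nonneg (c - a))
  have hab := mul_nonneg (sub_nonneg.2 hc) (sq_nonneg (a - b))
  linarith

theorem dist_le_two_thirds_mul_dist {X : Type*} [PseudoMetricSpace X] {P G O : X}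
    (h : 2 * dist P G ^ 2 + dist G O ^ 2 ≤ dist P O ^ 2) :
    dist P G ≤ 2 / 3 * dist P O := by
  have hGO : dist P O - dist P G ≤ dist G O := sub_le_iff_le_add'.2 (dist_triangle P G O)
  have hPG : dist P G ≤ dist P O := by
    refine (sq_le_sq₀ dist_nonneg dist_nonneg).1 ?_
    linarith [sq_nonneg (dist P G), sq_nonneg (dist G O)]
  have hsq : (dist P O - dist P G) ^ 2 ≤ dist G O ^ 2 :=
    pow_le_pow_left₀ (sub_nonneg.2 hPG) hGO 2
  have hprod : dist P G * (3 * dist P G - 2 * dist P O) ≤ 0 := by linarith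
  rcases (dist_nonneg : 0 ≤ dist P G).eq_or_lt with hzero | hpos
  · rw [← hzero]
    positivity
  · linarith [nonpos_of_mul_nonpos_right hprod hpos]

end Inequalities

theorem stmt_6_general {V : Type*} [NormedAddCommGroup V] [InnerProductSpace ℝ V]
    {A B C I G O : V} (hI : HasBarycentric A B C (dist B C) (dist C A) (dist A B) I)
    (hG : HasBarycentric A B C 1 1 1 G) (hAB : dist O A = dist O B) (hBC : dist O B = dist O C) :
    dist I G ≤ 2 / 3 * dist I O := by
  have hpower := hI.orthocentroidal_power_incenter rfl rfl rfl hG hAB hBC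
  have hsides := add_sub_mul_add_sub_mul_add_sub_le
    ((dist_comm B C).trans_le (dist_triangle C A B))
    ((dist_comm C A).trans_le (dist_triangle A B C))
    ((dist_comm A B).trans_le (dist_triangle B C A))
  have hdisk : 2 * dist I G ^ 2 + dist G O ^ 2 - dist I O ^ 2 ≤ 0 :=
    hpower.trans_le (div_nonpos_of_nonpos_of_nonneg (sub_nonpos.2 hsides) (by positivity))
  exact dist_le_two_thirds_mul_dist (sub_nonpos.1 hdisk)

section NondegenerateTriangle

theorem dist_lt_dist_add_dist_of_affineIndependent {V P : Type*} [NormedAddCommGroup V]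
    [NormedSpace ℝ V] [StrictConvexSpace ℝ V] [MetricSpace P] [NormedAddTorsor V P]
    {p : Fin 3 → P} (hp : AffineIndependent ℝ p) {i j k : Fin 3} (hij : i ≠ j) (hik : i ≠ k)
    (hjk : j ≠ k) : dist (p i) (p k) < dist (p i) (p j) + dist (p j) (p k) :=
  dist_lt_dist_add_dist_iff.2 <|
    mt Wbtw.collinear ((affineIndependent_iff_not_collinear_of_ne hij hik hjk).1 hp)

theorem side_lengths_lt_of_affineIndependent {V : Type*} [NormedAddCommGroup V]
    [NormedSpace ℝ V] [StrictConvexSpace ℝ V] {A B C : V} (h : AffineIndependent ℝ ![A, B, C]) :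
    dist B C < dist C A + dist A B ∧ dist C A < dist A B + dist B C ∧
      dist A B < dist B C + dist C A := by
  have hBC := dist_lt_dist_add_dist_of_affineIndependent h (i := 2) (j := 0) (k := 1)
    (by decide) (by decide) (by decide)
  have hCA := dist_lt_dist_add_dist_of_affineIndependent h (i := 0) (j := 1) (k := 2)
    (by decide) (by decide) (by decide)
  have hAB := dist_lt_dist_add_dist_of_affineIndependent h (i := 1) (j := 2) (k := 0)
    (by decide) (by decide) (by decide)
  exact ⟨(dist_comm B C).trans_lt hBC, (dist_comm C A).trans_lt hCA,
    (dist_comm A B).trans_lt hAB⟩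

/- The sum is `-16` times the squared area, by Heron's formula. -/
theorem sum_circumcenter_weights_ne_zero {a b c : ℝ} (ha : a < b + c) (hb : b < c + a)
    (hc : c < a + b) :
    a ^ 2 * (a ^ 2 - b ^ 2 - c ^ 2) + b ^ 2 * (b ^ 2 - c ^ 2 - a ^ 2) +
      c ^ 2 * (c ^ 2 - a ^ 2 - b ^ 2) ≠ 0 := by
  have hsum : 0 < a + b + c := by linarith
  have heron : 0 < (a + b + c) * (b + c - a) * (c + a - b) * (a + b - c) :=
    mul_pos (mul_pos (mul_pos hsum (sub_pos.2 ha)) (sub_pos.2 hb)) (sub_pos.2 hc)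
  refine ne_of_lt ?_
  linarith

theorem hasBarycentric_incenter {A B C : EuclideanSpace ℝ (Fin 2)}
    (h : AffineIndependent ℝ ![A, B, C]) :
    HasBarycentric A B C (dist B C) (dist C A) (dist A B) (tcenter (fun a _ _ ↦ a) A B C) := by
  obtain ⟨ha, hb, hc⟩ := side_lengths_lt_of_affineIndependent h
  exact hasBarycentric_bary A B C (by linarith)

theorem hasBarycentric_centroid (A B C : EuclideanSpace ℝ (Fin 2)) :
    HasBarycentric A B C 1 1 1 (tcenter (fun _ _ _ ↦ 1) A B C) :=
  hasBarycentric_bary A B C (by norm_num)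

theorem hasBarycentric_circumcenter {A B C : EuclideanSpace ℝ (Fin 2)}
    (h : AffineIndependent ℝ ![A, B, C]) :
    HasBarycentric A B C
      (dist B C ^ 2 * (dist B C ^ 2 - dist C A ^ 2 - dist A B ^ 2))
      (dist C A ^ 2 * (dist C A ^ 2 - dist A B ^ 2 - dist B C ^ 2))
      (dist A B ^ 2 * (dist A B ^ 2 - dist B C ^ 2 - dist C A ^ 2))
      (tcenter (fun a b c ↦ a ^ 2 * (a ^ 2 - b ^ 2 - c ^ 2)) A B C) := by
  obtain ⟨ha, hb, hc⟩ := side_lengths_lt_of_affineIndependent h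
  exact hasBarycentric_bary A B C (sum_circumcenter_weights_ne_zero ha hb hc)

end NondegenerateTriangle

theorem stmt_6 (A B C : EuclideanSpace ℝ (Fin 2))
    (h : AffineIndependent ℝ ![A, B, C]) :
    dist (tcenter (fun a b c => a) A B C) (tcenter (fun a b c => (1:Real)) A B C) ≤ (2/3) * dist (tcenter (fun a b c => a) A B C) (tcenter (fun a b c => a^2*(a^2 - b^2 - c^2)) A B C) := by
  have hO := hasBarycentric_circumcenter h
  exact stmt_6_general (hasBarycentric_incenter h) (hasBarycentric_centroid A B C)
    (hO.dist_circumcenter_eq rfl rfl rfl) (hO.rotate.dist_circumcenter_eq rfl rfl rfl)
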